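/- Consider the merge sort CHR^rp program with rules: 1 :: ms1 @ arrow(X,A) \ arrow(X,B) ⇔ A < B | arrow(A,B); 2 :: ms2 @ merge(N,A), merge(N,B) ⇔ A < B | merge(2·N+1,A), arrow(A,B); 3 :: ms3 @ number(X) ⇔ merge(0,X), executed under ω_p from an initial goal of n distinct number/1 constraints (n a power of 2). Then in any derivation, rule ms3 fires exactly n times, rule ms2 fires exactly n−1 times, the sum over all fired ms2 instances producing merge(2·N+1,_) of the values N is O(n log n), and consequently the total numbers of strong prefix firings are O(n log n) for rule ms1, O(n) for rule ms2, and O(n) for rule ms3. -/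

import Mathlib

namespace MergeSort

/-- The CHR constraints of the merge sort program: `number X`, `merge N A` and
`arrow A B`. -/
inductive MSC : Type
  | number (x : ℤ)
  | merge (n : ℕ) (a : ℤ)
  | arrow (a b : ℤ)
deriving DecidableEq

/-- Some instance of rule `ms1` (priority 1) is applicable in the store `S`. -/
def ms1App (S : Multiset MSC) : Prop :=
  ∃ X A B : ℤ, A < B ∧ MSC.arrow X A ∈ S ∧ MSC.arrow X B ∈ S

/-- Some instance of rule `ms2` (priority 2) is applicable in the store `S`. -/
def ms2App (S : Multiset MSC) : Prop :=
  ∃ (N : ℕ) (A B : ℤ), A < B ∧ MSC.merge N A ∈ S ∧ MSC.merge N B ∈ S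

/-- Transition labels recording which rule fired (for `ms2` also the value `N` of the
matched `merge` constraints). -/
inductive Lab : Type
  | ms1
  | ms2 (N : ℕ)
  | ms3
deriving DecidableEq

/-- The transitions of the priority semantics ω_p of the merge sort program
`1 :: ms1 @ arrow(X,A) \ arrow(X,B) ⇔ A < B | arrow(A,B)`,
`2 :: ms2 @ merge(N,A), merge(N,B) ⇔ A < B | merge(2·N+1,A), arrow(A,B)`,
`3 :: ms3 @ number(X) ⇔ merge(0,X)`:
among all applicable rule instances, one of highest priority (numerically smallest)
fires, removing the constraints matching removed heads and adding the instantiated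
body.  (The guards `A < B` make the matched head constraints distinct; since no rule is
a propagation rule, no propagation history is needed and states are just multisets of
stored constraints.) -/
inductive Step : Multiset MSC → Lab → Multiset MSC → Prop
  | ms1 (S : Multiset MSC) (X A B : ℤ) :
      A < B → MSC.arrow X A ∈ S → MSC.arrow X B ∈ S →
      Step S Lab.ms1 (MSC.arrow A B ::ₘ S.erase (MSC.arrow X B))
  | ms2 (S : Multiset MSC) (N : ℕ) (A B : ℤ) :
      A < B → MSC.merge N A ∈ S → MSC.merge N B ∈ S →
      ¬ ms1App S →
      Step S (Lab.ms2 N)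
        (MSC.merge (2 * N + 1) A ::ₘ MSC.arrow A B ::ₘ
          ((S.erase (MSC.merge N A)).erase (MSC.merge N B)))
  | ms3 (S : Multiset MSC) (X : ℤ) :
      MSC.number X ∈ S → ¬ ms1App S → ¬ ms2App S →
      Step S Lab.ms3 (MSC.merge 0 X ::ₘ S.erase (MSC.number X))

/-- The initial store: one `number` constraint for each element of `l`. -/
def InitState (l : List ℤ) : Multiset MSC := ↑(l.map MSC.number)

/-- Reachability from the initial store of `l`. -/
def Reach (l : List ℤ) (S : Multiset MSC) : Prop :=
  Relation.ReflTransGen (fun s s' => ∃ lab, Step s lab s') (InitState l) S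

/-- `merge` constraints with first argument `N`. -/
def mergeFst (N : ℕ) : MSC → Bool
  | .merge m _ => m = N
  | _ => false

/-- `arrow` constraints with first argument `V`. -/
def arrowFst (V : ℤ) : MSC → Bool
  | .arrow a _ => a = V
  | _ => false

end MergeSort

namespace MergeSort

/-- Is the label a firing of rule `ms2`? -/
def isMs2 : Lab → Bool
  | .ms2 _ => true
  | _ => false

/-- The value `N` of the `merge(N,_)` constraints matched by an `ms2` firing. -/
def ms2Val : Lab → ℕ
  | .ms2 N => N
  | _ => 0

end MergeSort

namespace MergeSort

/-- The target of a constraint; the multiset of targets is invariant. -/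
def tgt : MSC → ℤ
  | .number x => x
  | .merge _ a => a
  | .arrow _ b => b

def wNum : MSC → ℕ
  | .number _ => 1
  | _ => 0

def wMrg : MSC → ℕ
  | .merge _ _ => 1
  | _ => 0

def wWt : MSC → ℕ
  | .merge N _ => N + 1
  | _ => 0

def wPot : MSC → ℕ
  | .merge N _ => (N + 1) * Nat.log 2 (N + 1)
  | _ => 0

def k1 : Lab → ℕ
  | .ms1 => 1
  | _ => 0

def k2 : Lab → ℕ
  | .ms2 _ => 1
  | _ => 0

def k3 : Lab → ℕ
  | .ms3 => 1
  | _ => 0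

def kc : Lab → ℕ
  | .ms2 N => 2 * N + 2
  | _ => 0

def W (w : MSC → ℕ) (S : Multiset MSC) : ℕ := (S.map w).sum

theorem W_cons (w : MSC → ℕ) (x : MSC) (S : Multiset MSC) : W w (x ::ₘ S) = w x + W w S := by
  simp [W]

theorem W_erase (w : MSC → ℕ) {x : MSC} {S : Multiset MSC} (h : x ∈ S) :
    W w S = w x + W w (S.erase x) := by
  rw [← W_cons, Multiset.cons_erase h]

theorem log_double (N : ℕ) : Nat.log 2 (2 * N + 1 + 1) = Nat.log 2 (N + 1) + 1 := by
  have : 2 * N + 1 + 1 = (N + 1) * 2 := by ring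
  rw [this, Nat.log_mul_base (by norm_num) (by omega)]

theorem step_weights {S S' : Multiset MSC} {lab : Lab} (h : Step S lab S') :
    W wNum S' + k3 lab = W wNum S ∧ W wMrg S' + k2 lab = W wMrg S + k3 lab ∧
    W wWt S' = W wWt S + k3 lab ∧ W wPot S' = W wPot S + kc lab := by
  cases h with
  | ms1 X A B hAB h1 h2 =>
    simp only [W_cons, W_erase _ h2, wNum, wMrg, wWt, wPot, k2, k3, kc]
    refine ⟨?_, ?_, ?_, ?_⟩ <;> first | rfl | omega | simp | (simp; omega)
  | ms2 N A B hAB h1 h2 h3 =>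
    have h2' : MSC.merge N B ∈ S.erase (MSC.merge N A) := by
      rw [Multiset.mem_erase_of_ne]
      · exact h2
      · intro h
        injection h with _ h
        omega
    simp only [W_cons, W_erase _ h1, W_erase _ h2', wNum, wMrg, wWt, wPot, k2, k3, kc,
      log_double]
    refine ⟨by omega, by omega, by omega, by ring⟩
  | ms3 X h1 h2 h3 =>
    simp only [W_cons, W_erase _ h1, wNum, wMrg, wWt, wPot, k2, k3, kc]
    simp
    omega

structure Inv (l : List ℤ) (S : Multiset MSC) (ρ : ℤ → ℤ) (c : ℤ) (M : ℕ) : Prop where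
  tg : S.map tgt = ↑l
  arr : ∀ a b, MSC.arrow a b ∈ S → ρ a = ρ b ∧ a < b
  mrg : ∀ N a, MSC.merge N a ∈ S →
    ρ a = a ∧ (l.toFinset.filter (fun v => ρ v = a)).card = N + 1
  num : ∀ a, MSC.number a ∈ S →
    ρ a = a ∧ (l.toFinset.filter (fun v => ρ v = a)).card = 1
  pw : ∀ N a, MSC.merge N a ∈ S → ∃ j, N + 1 = 2 ^ j
  ou1 : ∀ X A B, X ≠ c → MSC.arrow X A ∈ S → MSC.arrow X B ∈ S → A = B
  ou2 : ∀ A B D, MSC.arrow c A ∈ S → MSC.arrow c B ∈ S → MSC.arrow c D ∈ S →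
    A = B ∨ A = D ∨ B = D
  me1 : ∀ X A B, X ≠ M → MSC.merge X A ∈ S → MSC.merge X B ∈ S → A = B
  me2 : ∀ A B D, MSC.merge M A ∈ S → MSC.merge M B ∈ S → MSC.merge M D ∈ S →
    A = B ∨ A = D ∨ B = D

/-- Remaining budget of `ms1` firings for the current merge. -/
def rem (l : List ℤ) (ρ : ℤ → ℤ) (c : ℤ) : ℕ :=
  (l.toFinset.filter (fun v => ρ v = ρ c ∧ c < v)).card

section
variable {l : List ℤ} {S : Multiset MSC} {ρ : ℤ → ℤ} {c : ℤ} {M : ℕ}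

theorem Inv.nodup (h : Inv l S ρ c M) (hl : l.Nodup) : S.Nodup := by
  apply Multiset.Nodup.of_map tgt
  rw [h.tg]; exact hl

theorem Inv.inj (h : Inv l S ρ c M) (hl : l.Nodup) {x y : MSC} (hx : x ∈ S) (hy : y ∈ S)
    (e : tgt x = tgt y) : x = y := by
  have hn : (S.map tgt).Nodup := by rw [h.tg]; exact hl
  exact Multiset.inj_on_of_nodup_map hn x hx y hy e

theorem Inv.mem (h : Inv l S ρ c M) {x : MSC} (hx : x ∈ S) : tgt x ∈ l := by
  have : tgt x ∈ S.map tgt := Multiset.mem_map_of_mem _ hx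
  rw [h.tg] at this; exact this

theorem inv_ms1 (h : Inv l S ρ c M) (hl : l.Nodup) {X A B : ℤ} (hAB : A < B)
    (h1 : MSC.arrow X A ∈ S) (h2 : MSC.arrow X B ∈ S) :
    X = c ∧ Inv l (MSC.arrow A B ::ₘ S.erase (MSC.arrow X B)) ρ A M ∧
      rem l ρ A + 1 ≤ rem l ρ c := by
  have hX : X = c := by
    by_contra hne
    have := h.ou1 X A B hne h1 h2
    omega
  subst hX
  have hm : ∀ y, y ∈ MSC.arrow A B ::ₘ S.erase (MSC.arrow X B) ↔
      y = MSC.arrow A B ∨ (y ≠ MSC.arrow X B ∧ y ∈ S) := by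
    intro y
    rw [Multiset.mem_cons, (h.nodup hl).mem_erase_iff]
  have a1 := h.arr _ _ h1
  have a2 := h.arr _ _ h2
  refine ⟨rfl, ?_, ?_⟩
  · constructor
    · rw [← h.tg, ← Multiset.cons_erase h2]
      simp [tgt]
    · intro a b hab
      rw [hm] at hab
      rcases hab with hab | ⟨_, hab⟩
      · injection hab with e1 e2
        subst e1 e2
        exact ⟨by rw [← a1.1, a2.1], hAB⟩
      · exact h.arr _ _ hab
    · intro N a ha
      rw [hm] at ha
      exact h.mrg N a (by simpa using ha)
    · intro a ha
      rw [hm] at ha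
      exact h.num a (by simpa using ha)
    · intro N a ha
      rw [hm] at ha
      exact h.pw N a (by simpa using ha)
    · intro Y D E hY hD hE
      rw [hm] at hD hE
      have o1 := h.ou1 Y D E
      have o2 := h.ou2 D E B
      grind
    · intro D E F hD hE hF
      rw [hm] at hD hE hF
      have o1 := h.ou1 A D E
      have o2 := h.ou1 A D F
      have o3 := h.ou1 A E F
      grind
    · intro N D E hN hD hE
      rw [hm] at hD hE
      exact h.me1 N D E hN (by simpa using hD) (by simpa using hE)
    · intro D E F hD hE hF
      rw [hm] at hD hE hF
      exact h.me2 D E F (by simpa using hD) (by simpa using hE) (by simpa using hF)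
  · unfold rem
    apply Nat.succ_le_of_lt
    apply Finset.card_lt_card
    rw [Finset.ssubset_iff_of_subset]
    · refine ⟨A, ?_, ?_⟩
      · have := h.mem h1
        simp only [tgt] at this
        simp [this, a1]
      · simp
    · intro v hv
      simp only [Finset.mem_filter] at hv ⊢
      refine ⟨hv.1, ?_, ?_⟩
      · rw [hv.2.1, a1.1]
      · omega

theorem inv_ms2 (h : Inv l S ρ c M) (hl : l.Nodup) {N : ℕ} {A B : ℤ} (hAB : A < B)
    (h1 : MSC.merge N A ∈ S) (h2 : MSC.merge N B ∈ S) (h3 : ¬ ms1App S) :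
    ∃ ρ' : ℤ → ℤ, Inv l (MSC.merge (2 * N + 1) A ::ₘ MSC.arrow A B ::ₘ
          ((S.erase (MSC.merge N A)).erase (MSC.merge N B))) ρ' A (2 * N + 1) ∧
      rem l ρ' A ≤ 2 * N + 2 := by
  have hN : N = M := by
    by_contra hne
    have := h.me1 N A B hne h1 h2
    omega
  subst hN
  have hm : ∀ y, y ∈ MSC.merge (2 * N + 1) A ::ₘ MSC.arrow A B ::ₘ
          ((S.erase (MSC.merge N A)).erase (MSC.merge N B)) ↔
      y = MSC.merge (2 * N + 1) A ∨ y = MSC.arrow A B ∨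
        (y ≠ MSC.merge N B ∧ y ≠ MSC.merge N A ∧ y ∈ S) := by
    intro y
    rw [Multiset.mem_cons, Multiset.mem_cons, ((h.nodup hl).erase _).mem_erase_iff,
      (h.nodup hl).mem_erase_iff]
  have h2' : MSC.merge N B ∈ S.erase (MSC.merge N A) := by
    rw [(h.nodup hl).mem_erase_iff]
    refine ⟨?_, h2⟩
    intro h
    injection h with _ h
    omega
  obtain ⟨rA, cA⟩ := h.mrg _ _ h1
  obtain ⟨rB, cB⟩ := h.mrg _ _ h2
  have hone : ∀ X D E, MSC.arrow X D ∈ S → MSC.arrow X E ∈ S → D = E := by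
    intro X D E hD hE
    by_contra hne
    rcases lt_or_gt_of_ne hne with hlt | hlt
    · exact h3 ⟨X, D, E, hlt, hD, hE⟩
    · exact h3 ⟨X, E, D, hlt, hE, hD⟩
  have hcard : (l.toFinset.filter (fun v => (if ρ v = B then A else ρ v) = A)).card
      = 2 * N + 2 := by
    have : l.toFinset.filter (fun v => (if ρ v = B then A else ρ v) = A) =
        l.toFinset.filter (fun v => ρ v = A) ∪ l.toFinset.filter (fun v => ρ v = B) := by
      ext v
      simp only [Finset.mem_filter, Finset.mem_union]
      grind
    rw [this, Finset.card_union_of_disjoint, cA, cB]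
    · ring
    · rw [Finset.disjoint_filter]
      intro v _ e1 e2
      omega
  have hoth : ∀ a, a ≠ A → a ≠ B →
      l.toFinset.filter (fun v => (if ρ v = B then A else ρ v) = a) =
        l.toFinset.filter (fun v => ρ v = a) := by
    intro a h1 h2
    ext v
    simp only [Finset.mem_filter]
    grind
  refine ⟨fun v => if ρ v = B then A else ρ v, ?_, ?_⟩
  · constructor
    · rw [← h.tg, ← Multiset.cons_erase h1, ← Multiset.cons_erase h2']
      simp [tgt]
    · intro a b hab
      rw [hm] at hab
      have := h.arr a b
      grind
    · intro K a ha
      rw [hm] at ha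
      rcases ha with ha | ha | ⟨n1, n2, ha⟩
      · injection ha with e1 e2
        subst e1 e2
        refine ⟨by grind, hcard⟩
      · exact absurd ha (by simp)
      · have q1 : a ≠ A := fun e => n2 (h.inj hl ha h1 (by simpa [tgt] using e))
        have q2 : a ≠ B := fun e => n1 (h.inj hl ha h2 (by simpa [tgt] using e))
        obtain ⟨r, cc⟩ := h.mrg _ _ ha
        refine ⟨by grind, ?_⟩
        rw [hoth a q1 q2, cc]
    · intro a ha
      rw [hm] at ha
      have ha : MSC.number a ∈ S := by simpa using ha
      have q1 : a ≠ A := fun e => by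
        have := h.inj hl ha h1 (by simpa [tgt] using e)
        simp at this
      have q2 : a ≠ B := fun e => by
        have := h.inj hl ha h2 (by simpa [tgt] using e)
        simp at this
      obtain ⟨r, cc⟩ := h.num _ ha
      refine ⟨by grind, ?_⟩
      rw [hoth a q1 q2, cc]
    · intro K a ha
      rw [hm] at ha
      rcases ha with ha | ha | ⟨n1, n2, ha⟩
      · injection ha with e1 e2
        obtain ⟨j, hj⟩ := h.pw _ _ h1
        refine ⟨j + 1, ?_⟩
        rw [pow_succ, ← hj, e1]; ring
      · exact absurd ha (by simp)
      · exact h.pw _ _ ha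
    · intro Y D E hY hD hE
      rw [hm] at hD hE
      have := hone Y D E
      grind
    · intro D E F hD hE hF
      rw [hm] at hD hE hF
      have o1 := hone A D E
      have o2 := hone A D F
      have o3 := hone A E F
      grind
    · intro K D E hK hD hE
      rw [hm] at hD hE
      have o1 := h.me1 K D E
      have o2 := h.me2 A D E
      grind
    · intro D E F hD hE hF
      rw [hm] at hD hE hF
      have o1 := h.me1 (2 * N + 1) D E (by omega)
      have o2 := h.me1 (2 * N + 1) D F (by omega)
      have o3 := h.me1 (2 * N + 1) E F (by omega)
      grind
  · rw [← hcard]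
    unfold rem
    apply Finset.card_le_card
    intro v hv
    simp only [Finset.mem_filter] at hv ⊢
    refine ⟨hv.1, ?_⟩
    grind

theorem inv_ms3 (h : Inv l S ρ c M) (hl : l.Nodup) {X : ℤ}
    (h1 : MSC.number X ∈ S) (h3 : ¬ ms2App S) :
    Inv l (MSC.merge 0 X ::ₘ S.erase (MSC.number X)) ρ c 0 := by
  have hm : ∀ y, y ∈ MSC.merge 0 X ::ₘ S.erase (MSC.number X) ↔
      y = MSC.merge 0 X ∨ (y ≠ MSC.number X ∧ y ∈ S) := by
    intro y
    rw [Multiset.mem_cons, (h.nodup hl).mem_erase_iff]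
  have hone : ∀ X D E, MSC.merge X D ∈ S → MSC.merge X E ∈ S → D = E := by
    intro X D E hD hE
    by_contra hne
    rcases lt_or_gt_of_ne hne with hlt | hlt
    · exact h3 ⟨X, D, E, hlt, hD, hE⟩
    · exact h3 ⟨X, E, D, hlt, hE, hD⟩
  constructor
  · rw [← h.tg, ← Multiset.cons_erase h1]
    simp [tgt]
  · intro a b hab
    rw [hm] at hab
    exact h.arr a b (by simpa using hab)
  · intro N a ha
    rw [hm] at ha
    rcases ha with ha | ⟨_, ha⟩
    · injection ha with e1 e2
      subst e1 e2
      exact h.num _ h1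
    · exact h.mrg _ _ ha
  · intro a ha
    rw [hm] at ha
    exact h.num a (by grind)
  · intro N a ha
    rw [hm] at ha
    rcases ha with ha | ⟨_, ha⟩
    · injection ha with e1 e2
      exact ⟨0, by simp [e1]⟩
    · exact h.pw _ _ ha
  · intro Y D E hY hD hE
    rw [hm] at hD hE
    exact h.ou1 Y D E hY (by simpa using hD) (by simpa using hE)
  · intro D E F hD hE hF
    rw [hm] at hD hE hF
    exact h.ou2 D E F (by simpa using hD) (by simpa using hE) (by simpa using hF)
  · intro K D E hK hD hE
    rw [hm] at hD hE
    have := hone K D E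
    grind
  · intro D E F hD hE hF
    rw [hm] at hD hE hF
    have o1 := hone 0 D E
    have o2 := hone 0 D F
    have o3 := hone 0 E F
    grind

theorem pair_unique {R : ℤ → Prop}
    (h : ∀ A B D, R A → R B → R D → A = B ∨ A = D ∨ B = D)
    {A B D E : ℤ} (hA : R A) (hB : R B) (hD : R D) (hE : R E) (h1 : A < B) (h2 : D < E) :
    A = D ∧ B = E := by
  have q1 := h A B D hA hB hD
  have q2 := h A B E hA hB hE
  omega

end

def C1 (g : ℕ → Lab) (i : ℕ) : ℕ := ∑ j ∈ Finset.range i, k1 (g j)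
def C2 (g : ℕ → Lab) (i : ℕ) : ℕ := ∑ j ∈ Finset.range i, k2 (g j)
def C3 (g : ℕ → Lab) (i : ℕ) : ℕ := ∑ j ∈ Finset.range i, k3 (g j)
def CC (g : ℕ → Lab) (i : ℕ) : ℕ := ∑ j ∈ Finset.range i, kc (g j)

/-- One step: everything that is needed about invariants and new prefix firings. -/
theorem step_all {l : List ℤ} (hl : l.Nodup) {S S' : Multiset MSC} {lab : Lab}
    {ρ : ℤ → ℤ} {c : ℤ} {M : ℕ} (h : Inv l S ρ c M) (hs : Step S lab S') :
    ∃ (ρ' : ℤ → ℤ) (c' : ℤ) (M' : ℕ) (TA : Finset (ℤ × ℤ)) (TP : Finset (ℤ × ℤ × ℤ))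
      (TM : Finset (ℕ × ℤ)) (TQ : Finset (ℕ × ℤ × ℤ)),
      Inv l S' ρ' c' M' ∧ k1 lab + rem l ρ' c' ≤ rem l ρ c + kc lab ∧
      TA.card ≤ k1 lab + k2 lab ∧ TP.card ≤ k1 lab ∧ TM.card ≤ k2 lab + k3 lab ∧
      TQ.card ≤ k2 lab ∧
      (∀ a b, MSC.arrow a b ∈ S' → MSC.arrow a b ∈ S ∨ (a, b) ∈ TA) ∧
      (∀ X A B, A < B → MSC.arrow X A ∈ S → MSC.arrow X B ∈ S → (X, A, B) ∈ TP) ∧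
      (∀ N a, MSC.merge N a ∈ S' → MSC.merge N a ∈ S ∨ (N, a) ∈ TM) ∧
      (∀ X A B, A < B → ¬ ms1App S → MSC.merge X A ∈ S → MSC.merge X B ∈ S →
        (X, A, B) ∈ TQ) := by
  cases hs with
  | ms1 X A B hAB h1 h2 =>
    obtain ⟨e, hi, hr⟩ := inv_ms1 h hl hAB h1 h2
    subst e
    refine ⟨ρ, A, M, {(A, B)}, {(X, A, B)}, ∅, ∅, hi, by simp [k1, kc]; omega, by simp [k1],
      by simp [k1], by simp, by simp, ?_, ?_, ?_, ?_⟩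
    · intro a b hab
      rcases Multiset.mem_cons.1 hab with e | e
      · right; simpa using e
      · left; exact Multiset.mem_of_mem_erase e
    · intro Y D E hDE hD hE
      have hY : Y = X := by
        by_contra hne
        have := h.ou1 Y D E hne hD hE
        omega
      subst hY
      have := pair_unique (R := fun A => MSC.arrow Y A ∈ S) h.ou2 hD hE h1 h2 hDE hAB
      simp [this]
    · intro N a hab
      rcases Multiset.mem_cons.1 hab with e | e
      · simp at e
      · left; exact Multiset.mem_of_mem_erase e
    · intro _ _ _ _ hn
      exact absurd ⟨X, A, B, hAB, h1, h2⟩ hn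
  | ms2 N A B hAB h1 h2 h3 =>
    obtain ⟨ρ', hi, hr⟩ := inv_ms2 h hl hAB h1 h2 h3
    refine ⟨ρ', A, 2 * N + 1, {(A, B)}, ∅, {(2 * N + 1, A)}, {(N, A, B)}, hi,
      by simp [k1, kc]; omega, by simp [k2], by simp, by simp [k2], by simp [k2],
      ?_, ?_, ?_, ?_⟩
    · intro a b hab
      rcases Multiset.mem_cons.1 hab with e | e
      · simp at e
      rcases Multiset.mem_cons.1 e with e | e
      · right; simpa using e
      · left; exact Multiset.mem_of_mem_erase (Multiset.mem_of_mem_erase e)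
    · intro Y D E hDE hD hE
      exact absurd ⟨Y, D, E, hDE, hD, hE⟩ h3
    · intro K a hab
      rcases Multiset.mem_cons.1 hab with e | e
      · right; simpa using e
      rcases Multiset.mem_cons.1 e with e | e
      · simp at e
      · left; exact Multiset.mem_of_mem_erase (Multiset.mem_of_mem_erase e)
    · intro Y D E hDE _ hD hE
      have hY : Y = M := by
        by_contra hne
        have := h.me1 Y D E hne hD hE
        omega
      have hN : N = M := by
        by_contra hne
        have := h.me1 N A B hne h1 h2
        omega
      subst hY hN
      have := pair_unique (R := fun A => MSC.merge N A ∈ S) h.me2 hD hE h1 h2 hDE hAB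
      simp [this]
  | ms3 X h1 h2 h3 =>
    refine ⟨ρ, c, 0, ∅, ∅, {(0, X)}, ∅, inv_ms3 h hl h1 h3, by simp [k1, kc], by simp,
      by simp, by simp [k3], by simp, ?_, ?_, ?_, ?_⟩
    · intro a b hab
      rcases Multiset.mem_cons.1 hab with e | e
      · simp at e
      · left; exact Multiset.mem_of_mem_erase e
    · intro Y D E hDE hD hE
      exact absurd ⟨Y, D, E, hDE, hD, hE⟩ h2
    · intro N a hab
      rcases Multiset.mem_cons.1 hab with e | e
      · right; simpa using e
      · left; exact Multiset.mem_of_mem_erase e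
    · intro Y D E hDE _ hD hE
      exact absurd ⟨Y, D, E, hDE, hD, hE⟩ h3

theorem inv_start {l : List ℤ} (hl : l.Nodup) : Inv l (InitState l) id 0 0 := by
  have hm : ∀ y, y ∈ InitState l ↔ ∃ x ∈ l, MSC.number x = y := by
    intro y; simp [InitState]
  constructor
  · have : tgt ∘ MSC.number = id := by funext x; rfl
    simp [InitState, this]
  · intro a b hab; rw [hm] at hab; simp at hab
  · intro a b hab; rw [hm] at hab; simp at hab
  · intro a ha
    rw [hm] at ha
    have ha : a ∈ l := by simpa using ha
    refine ⟨rfl, ?_⟩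
    rw [Finset.card_eq_one]
    refine ⟨a, ?_⟩
    ext v
    simp only [Finset.mem_filter, List.mem_toFinset, id, Finset.mem_singleton]
    grind
  · intro a b hab; rw [hm] at hab; simp at hab
  · intro a b _ _ hab; rw [hm] at hab; simp at hab
  · intro a b _ hab; rw [hm] at hab; simp at hab
  · intro a b _ _ hab; rw [hm] at hab; simp at hab
  · intro a b _ hab; rw [hm] at hab; simp at hab

theorem weights_start (l : List ℤ) : W wNum (InitState l) = l.length ∧ W wMrg (InitState l) = 0 ∧
    W wWt (InitState l) = 0 ∧ W wPot (InitState l) = 0 := by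
  induction l with
  | nil => simp [InitState, W]
  | cons a t ih =>
    have : InitState (a :: t) = MSC.number a ::ₘ InitState t := by simp [InitState]
    rw [this]
    simp only [W_cons, ih, wNum, wMrg, wWt, wPot, List.length_cons]
    refine ⟨?_, ?_, ?_, ?_⟩ <;> first | rfl | omega | simp | (simp; omega)

theorem run_weights {l : List ℤ} {L : ℕ} {f : ℕ → Multiset MSC} {g : ℕ → Lab}
    (h0 : f 0 = InitState l) (hs : ∀ i < L, Step (f i) (g i) (f (i + 1))) :
    ∀ i ≤ L, W wNum (f i) + C3 g i = l.length ∧ W wMrg (f i) + C2 g i = C3 g i ∧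
      W wWt (f i) = C3 g i ∧ W wPot (f i) = CC g i := by
  intro i
  induction i with
  | zero =>
    intro _
    have := weights_start l
    rw [h0]
    simp [C2, C3, CC, this]
  | succ i ih =>
    intro hi
    have := ih (by omega)
    have hw := step_weights (hs i (by omega))
    have e2 : C2 g (i + 1) = C2 g i + k2 (g i) := Finset.sum_range_succ _ _
    have e3 : C3 g (i + 1) = C3 g i + k3 (g i) := Finset.sum_range_succ _ _
    have ec : CC g (i + 1) = CC g i + kc (g i) := Finset.sum_range_succ _ _
    omega

theorem run_inv {l : List ℤ} (hl : l.Nodup) {L : ℕ} {f : ℕ → Multiset MSC} {g : ℕ → Lab}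
    (h0 : f 0 = InitState l) (hs : ∀ i < L, Step (f i) (g i) (f (i + 1))) :
    ∀ i ≤ L, ∃ (ρ : ℤ → ℤ) (c : ℤ) (M : ℕ) (TA : Finset (ℤ × ℤ)) (TP : Finset (ℤ × ℤ × ℤ))
      (TM : Finset (ℕ × ℤ)) (TQ : Finset (ℕ × ℤ × ℤ)),
      Inv l (f i) ρ c M ∧ C1 g i + rem l ρ c ≤ CC g i ∧
      TA.card ≤ C1 g i + C2 g i ∧ TP.card ≤ C1 g i ∧ TM.card ≤ C2 g i + C3 g i ∧
      TQ.card ≤ C2 g i ∧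
      (∀ j ≤ i, ∀ a b, MSC.arrow a b ∈ f j → (a, b) ∈ TA) ∧
      (∀ j < i, ∀ X A B, A < B → MSC.arrow X A ∈ f j → MSC.arrow X B ∈ f j →
        (X, A, B) ∈ TP) ∧
      (∀ j ≤ i, ∀ N a, MSC.merge N a ∈ f j → (N, a) ∈ TM) ∧
      (∀ j < i, ∀ X A B, A < B → ¬ ms1App (f j) → MSC.merge X A ∈ f j →
        MSC.merge X B ∈ f j → (X, A, B) ∈ TQ) := by
  classical
  intro i
  induction i with
  | zero =>
    intro _
    have hstart : ∀ y, y ∈ InitState l ↔ ∃ x ∈ l, MSC.number x = y := by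
      intro y; simp [InitState]
    refine ⟨id, 0, 0, ∅, ∅, ∅, ∅, by rw [h0]; exact inv_start hl, ?_, by simp, by simp,
      by simp, by simp, ?_, by simp, ?_, by simp⟩
    · have : rem l id 0 = 0 := by
        unfold rem
        rw [Finset.card_eq_zero, Finset.filter_eq_empty_iff]
        intro v _ hv
        simp only [id] at hv
        omega
      rw [this]
      simp [C1]
    · intro j hj a b hab
      have : j = 0 := by omega
      subst this
      rw [h0, hstart] at hab
      simp at hab
    · intro j hj a b hab
      have : j = 0 := by omega
      subst this
      rw [h0, hstart] at hab
      simp at hab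
  | succ i ih =>
    intro hi
    obtain ⟨ρ, c, M, TA, TP, TM, TQ, hinv, hr, cA, cP, cM, cQ, iA, iP, iM, iQ⟩ :=
      ih (by omega)
    obtain ⟨ρ', c', M', TA', TP', TM', TQ', hinv', hr', cA', cP', cM', cQ', iA', iP', iM', iQ'⟩ :=
      step_all hl hinv (hs i (by omega))
    have e1 : C1 g (i + 1) = C1 g i + k1 (g i) := Finset.sum_range_succ _ _
    have e2 : C2 g (i + 1) = C2 g i + k2 (g i) := Finset.sum_range_succ _ _
    have e3 : C3 g (i + 1) = C3 g i + k3 (g i) := Finset.sum_range_succ _ _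
    have ec : CC g (i + 1) = CC g i + kc (g i) := Finset.sum_range_succ _ _
    have uA := Finset.card_union_le TA TA'
    have uP := Finset.card_union_le TP TP'
    have uM := Finset.card_union_le TM TM'
    have uQ := Finset.card_union_le TQ TQ'
    refine ⟨ρ', c', M', TA ∪ TA', TP ∪ TP', TM ∪ TM', TQ ∪ TQ', hinv', by omega, by omega,
      by omega, by omega, by omega, ?_, ?_, ?_, ?_⟩
    · intro j hj a b hab
      rw [Finset.mem_union]
      rcases Nat.lt_or_ge i j with hlt | hle
      · have : j = i + 1 := by omega
        subst this
        rcases iA' a b hab with q | q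
        · exact Or.inl (iA i le_rfl a b q)
        · exact Or.inr q
      · exact Or.inl (iA j hle a b hab)
    · intro j hj X A B hAB h1 h2
      rw [Finset.mem_union]
      rcases Nat.lt_or_ge j i with hlt | hle
      · exact Or.inl (iP j hlt X A B hAB h1 h2)
      · have : j = i := by omega
        subst this
        exact Or.inr (iP' X A B hAB h1 h2)
    · intro j hj a b hab
      rw [Finset.mem_union]
      rcases Nat.lt_or_ge i j with hlt | hle
      · have : j = i + 1 := by omega
        subst this
        rcases iM' a b hab with q | q
        · exact Or.inl (iM i le_rfl a b q)
        · exact Or.inr q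
      · exact Or.inl (iM j hle a b hab)
    · intro j hj X A B hAB hn h1 h2
      rw [Finset.mem_union]
      rcases Nat.lt_or_ge j i with hlt | hle
      · exact Or.inl (iQ j hlt X A B hAB hn h1 h2)
      · have : j = i := by omega
        subst this
        exact Or.inr (iQ' X A B hAB hn h1 h2)

theorem final_facts {S : Multiset MSC} (h : ∀ lab S', ¬ Step S lab S') :
    (∀ X, MSC.number X ∉ S) ∧ ¬ ms2App S := by
  have h1 : ¬ ms1App S := by
    rintro ⟨X, A, B, hAB, h1, h2⟩
    exact h _ _ (Step.ms1 S X A B hAB h1 h2)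
  have h2 : ¬ ms2App S := by
    rintro ⟨X, A, B, hAB, p1, p2⟩
    exact h _ _ (Step.ms2 S X A B hAB p1 p2 h1)
  exact ⟨fun X hX => h _ _ (Step.ms3 S X hX h1 h2), h2⟩

theorem pow_sum_single {s : Finset ℕ} {k : ℕ} (h : ∑ j ∈ s, 2 ^ j = 2 ^ k) : s = {k} := by
  have hk : k ∈ s := by
    by_contra hk
    have hlt : ∀ j ∈ s, j < k := by
      intro j hj
      have h1 : 2 ^ j ≤ ∑ j ∈ s, 2 ^ j := Finset.single_le_sum (f := fun j => 2 ^ j) (by simp) hj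
      rw [h] at h1
      have h2 : j ≤ k := (Nat.pow_le_pow_iff_right (by norm_num)).1 h1
      have h3 : j ≠ k := fun e => hk (e ▸ hj)
      omega
    have := Nat.geomSum_lt (m := 2) (n := k) (s := s) le_rfl hlt
    omega
  have h1 := Finset.add_sum_erase s (fun j => 2 ^ j) hk
  have h2 : ∑ j ∈ s.erase k, 2 ^ j = 0 := by omega
  rw [Finset.sum_eq_zero_iff] at h2
  have h3 : s.erase k = ∅ := by
    rw [Finset.eq_empty_iff_forall_notMem]
    intro j hj
    have := h2 j hj
    simp at this
  rw [← Finset.insert_erase hk, h3]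
  rfl

def lv : MSC → ℕ
  | .merge N _ => Nat.log 2 (N + 1)
  | _ => 0

def isM : MSC → Prop
  | .merge _ _ => True
  | _ => False

theorem final_one {l : List ℤ} (hl : l.Nodup) {S : Multiset MSC} {ρ : ℤ → ℤ} {c : ℤ} {M k : ℕ}
    (h : Inv l S ρ c M) (h2 : ¬ ms2App S) (hw : W wWt S = 2 ^ k) :
    W wMrg S = 1 ∧ W wPot S = 2 ^ k * k := by
  classical
  have hnd := h.nodup hl
  set T : Finset MSC := ⟨S, hnd⟩ with hT
  have hsum : ∀ w : MSC → ℕ, W w S = ∑ x ∈ T, w x := fun w => rfl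
  have hfil : ∀ w : MSC → ℕ, (∀ x, ¬ isM x → w x = 0) → W w S = ∑ x ∈ T.filter isM, w x := by
    intro w hw
    rw [hsum, Finset.sum_filter]
    apply Finset.sum_congr rfl
    intro x _
    split_ifs with hx
    · rfl
    · exact hw x hx
  have hpow : ∀ x ∈ T.filter isM, wWt x = 2 ^ lv x := by
    intro x hx
    rw [Finset.mem_filter] at hx
    obtain ⟨hx, hM⟩ := hx
    cases x with
    | number a => exact absurd hM (by simp [isM])
    | arrow a b => exact absurd hM (by simp [isM])
    | merge N a =>
      obtain ⟨j, hj⟩ := h.pw N a hx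
      simp [wWt, lv, hj, Nat.log_pow]
  have hinj : Set.InjOn lv (T.filter isM : Finset MSC) := by
    intro x hx y hy e
    have px := hpow x hx
    have py := hpow y hy
    rw [← e, ← px] at py
    simp only [Finset.coe_filter, Set.mem_ofPred_eq] at hx hy
    obtain ⟨hx, hMx⟩ := hx
    obtain ⟨hy, hMy⟩ := hy
    cases x with
    | number a => exact absurd hMx (by simp [isM])
    | arrow a b => exact absurd hMx (by simp [isM])
    | merge N a =>
      cases y with
      | number a => exact absurd hMy (by simp [isM])
      | arrow a b => exact absurd hMy (by simp [isM])
      | merge K b =>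
        simp only [wWt] at py
        have : K = N := by omega
        subst this
        have : a = b := by
          by_contra hne
          rcases lt_or_gt_of_ne hne with hlt | hlt
          · exact h2 ⟨K, a, b, hlt, hx, hy⟩
          · exact h2 ⟨K, b, a, hlt, hy, hx⟩
        rw [this]
  have hs : ∑ j ∈ (T.filter isM).image lv, 2 ^ j = 2 ^ k := by
    rw [Finset.sum_image hinj, ← hw, hfil wWt (by intro x hx; cases x <;> simp_all [isM, wWt])]
    exact Finset.sum_congr rfl (fun x hx => (hpow x hx).symm)
  have him := pow_sum_single hs
  have hcard : (T.filter isM).card = 1 := by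
    rw [← Finset.card_image_of_injOn hinj, him]
    simp
  obtain ⟨x, hx⟩ := Finset.card_eq_one.1 hcard
  rw [hfil wMrg (by intro x hx; cases x <;> simp_all [isM, wMrg]),
    hfil wPot (by intro x hx; cases x <;> simp_all [isM, wPot])]
  have hxm : x ∈ T.filter isM := by rw [hx]; simp
  have hxl : lv x = k := by
    have : lv x ∈ (T.filter isM).image lv := Finset.mem_image_of_mem _ hxm
    rw [him] at this
    simpa using this
  have hxw := hpow x hxm
  have hxM := (Finset.mem_filter.1 hxm).2
  rw [hx, Finset.sum_singleton, Finset.sum_singleton]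
  cases x with
  | number a => exact absurd hxM (by simp [isM])
  | arrow a b => exact absurd hxM (by simp [isM])
  | merge N a =>
    simp only [wWt, lv] at hxw hxl
    rw [hxl] at hxw
    simp only [wMrg, wPot, hxl, hxw]
    simp

end MergeSort

open MergeSort in
/-- In the merge sort CHR^rp program executed under ω_p from an initial goal of `n`
distinct `number/1` constraints (`n` a power of 2), in any complete derivation
(`f 0 → f 1 → ⋯ → f L` with `f L` final): rule `ms3` fires exactly `n` times, rule
`ms2` fires exactly `n − 1` times, the sum over all fired `ms2` instances producing
`merge(2·N+1,_)` of the values `N` is `O(n log n)`, and the total numbers of strong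
prefix firings (partial matches of head prefixes, with guard prefix satisfied, holding
in some state of the derivation whose priority is lower than or equal to the rule's
priority — identified by the instantiation of the variables of the matched prefix) are
`O(n log n)` for rule `ms1`, `O(n)` for rule `ms2` and `O(n)` for rule `ms3`. -/
theorem merge_sort_firing_and_prefix_counts :
    ∃ C : ℕ, ∀ (k n : ℕ) (l : List ℤ) (L : ℕ) (f : ℕ → Multiset MSC) (g : ℕ → Lab),
      n = 2 ^ k → l.length = n → l.Nodup →
      f 0 = InitState l →
      (∀ i < L, Step (f i) (g i) (f (i + 1))) →
      (∀ lab S', ¬ Step (f L) lab S') →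
      (((Finset.range L).filter (fun i => g i = Lab.ms3)).card = n ∧
       ((Finset.range L).filter (fun i => isMs2 (g i) = true)).card = n - 1 ∧
       (∑ i ∈ Finset.range L, ms2Val (g i)) ≤ C * (n * Nat.log 2 n + n) ∧
       -- strong prefix firings of ms1 (priority 1: every non-final state qualifies)
       Set.ncard {q : ℤ × ℤ | ∃ i < L, MSC.arrow q.1 q.2 ∈ f i} +
         Set.ncard {q : ℤ × ℤ × ℤ | q.2.1 < q.2.2 ∧
           ∃ i < L, MSC.arrow q.1 q.2.1 ∈ f i ∧ MSC.arrow q.1 q.2.2 ∈ f i} ≤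
         C * (n * Nat.log 2 n + n) ∧
       -- strong prefix firings of ms2 (priority 2: states with no ms1 instance)
       Set.ncard {q : ℕ × ℤ | ∃ i < L, ¬ ms1App (f i) ∧ MSC.merge q.1 q.2 ∈ f i} +
         Set.ncard {q : ℕ × ℤ × ℤ | q.2.1 < q.2.2 ∧
           ∃ i < L, ¬ ms1App (f i) ∧ MSC.merge q.1 q.2.1 ∈ f i ∧
             MSC.merge q.1 q.2.2 ∈ f i} ≤ C * n ∧
       -- strong prefix firings of ms3 (priority 3: states with no ms1/ms2 instance)
       Set.ncard {X : ℤ | ∃ i < L, ¬ ms1App (f i) ∧ ¬ ms2App (f i) ∧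
         MSC.number X ∈ f i} ≤ C * n) := by
  refine ⟨3, ?_⟩
  intro k n l L f g hn hlen hl h0 hs hfin
  obtain ⟨ρ, c, M, TA, TP, TM, TQ, hinv, hr, cA, cP, cM, cQ, iA, iP, iM, iQ⟩ :=
    run_inv hl h0 hs L le_rfl
  obtain ⟨w1, w2, w3, w4⟩ := run_weights h0 hs L le_rfl
  obtain ⟨nonum, noms2⟩ := final_facts hfin
  have wn : W wNum (f L) = 0 := by
    unfold W
    rw [Multiset.sum_eq_zero_iff]
    intro y hy
    rw [Multiset.mem_map] at hy
    obtain ⟨x, hx, rfl⟩ := hy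
    cases x with
    | number a => exact absurd hx (nonum a)
    | merge _ _ => rfl
    | arrow _ _ => rfl
  have hC3 : C3 g L = n := by omega
  obtain ⟨f1, f2⟩ := final_one (k := k) hl hinv noms2 (by rw [w3, hC3, hn])
  have hC2 : C2 g L + 1 = n := by omega
  have hCC : CC g L = n * k := by rw [← w4, f2, hn]
  have hlog : Nat.log 2 n = k := by rw [hn, Nat.log_pow (by norm_num)]
  have b1 : C1 g L ≤ n * k := by omega
  have d1 : Set.ncard {q : ℤ × ℤ | ∃ i < L, MSC.arrow q.1 q.2 ∈ f i} ≤ TA.card := by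
    rw [← Set.ncard_coe_finset]
    apply Set.ncard_le_ncard _ (Finset.finite_toSet _)
    rintro ⟨a, b⟩ ⟨i, hi, hm⟩
    exact iA i hi.le a b hm
  have d2 : Set.ncard {q : ℤ × ℤ × ℤ | q.2.1 < q.2.2 ∧
           ∃ i < L, MSC.arrow q.1 q.2.1 ∈ f i ∧ MSC.arrow q.1 q.2.2 ∈ f i} ≤ TP.card := by
    rw [← Set.ncard_coe_finset]
    apply Set.ncard_le_ncard _ (Finset.finite_toSet _)
    rintro ⟨x, a, b⟩ ⟨hab, i, hi, m1, m2⟩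
    exact iP i hi x a b hab m1 m2
  have d3 : Set.ncard {q : ℕ × ℤ | ∃ i < L, ¬ ms1App (f i) ∧ MSC.merge q.1 q.2 ∈ f i}
      ≤ TM.card := by
    rw [← Set.ncard_coe_finset]
    apply Set.ncard_le_ncard _ (Finset.finite_toSet _)
    rintro ⟨a, b⟩ ⟨i, hi, _, hm⟩
    exact iM i hi.le a b hm
  have d4 : Set.ncard {q : ℕ × ℤ × ℤ | q.2.1 < q.2.2 ∧
           ∃ i < L, ¬ ms1App (f i) ∧ MSC.merge q.1 q.2.1 ∈ f i ∧
             MSC.merge q.1 q.2.2 ∈ f i} ≤ TQ.card := by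
    rw [← Set.ncard_coe_finset]
    apply Set.ncard_le_ncard _ (Finset.finite_toSet _)
    rintro ⟨x, a, b⟩ ⟨hab, i, hi, hn1, m1, m2⟩
    exact iQ i hi x a b hab hn1 m1 m2
  have d5 : Set.ncard {X : ℤ | ∃ i < L, ¬ ms1App (f i) ∧ ¬ ms2App (f i) ∧
         MSC.number X ∈ f i} ≤ n := by
    have : (l.toFinset).card ≤ n := by rw [← hlen]; exact List.toFinset_card_le l
    refine le_trans ?_ this
    rw [← Set.ncard_coe_finset]
    apply Set.ncard_le_ncard _ (Finset.finite_toSet _)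
    rintro X ⟨i, hi, _, _, hm⟩
    obtain ⟨ρ', c', M', _, _, _, _, hinv', _⟩ := run_inv hl h0 hs i hi.le
    have := hinv'.mem hm
    simpa [tgt] using this
  refine ⟨?_, ?_, ?_, ?_, ?_, ?_⟩
  · rw [Finset.card_filter, ← hC3]
    apply Finset.sum_congr rfl
    intro i _
    cases g i <;> simp [k3]
  · have : C2 g L = n - 1 := by omega
    rw [Finset.card_filter, ← this]
    apply Finset.sum_congr rfl
    intro i _
    cases g i <;> simp [k2, isMs2]
  · have : ∑ i ∈ Finset.range L, ms2Val (g i) ≤ CC g L := by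
      apply Finset.sum_le_sum
      intro i _
      cases g i <;> simp [kc, ms2Val]
      omega
    rw [hlog]
    omega
  · rw [hlog]
    omega
  · omega
  · omega
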